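/- Let X be a nonempty compact monotone metric space and let k be a positive integer. Then X can be mapped onto the k-dimensional cube [0,1]^k by a Lipschitz map if and only if X has positive k-dimensional Hausdorff measure H^k(X) > 0. -/

import Mathlib

open MeasureTheory
open scoped ENNReal NNReal

/-! Let `X` be `C`-monotone. The `k`-dimensional Hausdorff content of the initial segment `Iic x` is
a function of `x` that is Hölder of exponent `k`, because the content of an interval `Icc a b` is
at most `diam (Icc a b) ^ k ≤ (C * dist a b) ^ k`. It does not jump over the gaps of the order,
because points have zero content, so by compactness it takes all values between `0` and the content
of `X`, and the latter is positive as soon as `μH[k] X` is. Rescaled, it maps `X` onto `[0,1]`.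

A Peano curve maps `[0,1]` onto `[0,1]^k` and is Hölder of exponent `1 / k`. In the composite the
exponents multiply to `1`, which gives the Lipschitz map. Conversely, a Lipschitz map takes null
sets of `μH[k]` to null sets, and the cube is not one. -/

open Filter Topology

section HolderLimit

theorem holderWith_of_dist_le {X Y : Type*} [PseudoMetricSpace X] [PseudoMetricSpace Y]
    {C r : ℝ≥0} {f : X → Y} (hf : ∀ x y, dist (f x) (f y) ≤ C * dist x y ^ (r : ℝ)) :
    HolderWith C r f := fun x y ↦ by
  rw [edist_dist, edist_dist, ENNReal.ofReal_rpow_of_nonneg dist_nonneg r.coe_nonneg,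
    ← ENNReal.ofReal_coe_nnreal, ← ENNReal.ofReal_mul C.coe_nonneg]
  exact ENNReal.ofReal_le_ofReal (hf x y)

/-- The map is a pointwise limit along an ultrafilter; the error `δ` allows the approximating maps
to be discontinuous. -/
theorem exists_holderWith_surjective_of_tendsto {α X Y : Type*} {l : Filter α} [l.NeBot]
    [PseudoMetricSpace X] [CompactSpace X] [MetricSpace Y] [CompactSpace Y]
    {C r : ℝ≥0} (hr : 0 < r) {f : α → X → Y} {δ : α → ℝ} (hδ : Tendsto δ l (𝓝 0))
    (hf : ∀ a x y, dist (f a x) (f a y) ≤ C * dist x y ^ (r : ℝ) + δ a)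
    (hdense : ∀ a y, ∃ x, dist (f a x) y ≤ δ a) :
    ∃ g : X → Y, HolderWith C r g ∧ Function.Surjective g := by
  let U := Ultrafilter.of l
  have hδU : Tendsto δ U (𝓝 0) := hδ.mono_left (Ultrafilter.of_le l)
  let g : X → Y := fun x ↦ (U.map fun a ↦ f a x).lim
  have hg (x : X) : Tendsto (fun a ↦ f a x) U (𝓝 (g x)) := Ultrafilter.le_nhds_lim _
  refine ⟨g, holderWith_of_dist_le fun x y ↦ ?_, fun y ↦ ?_⟩
  · have hbound := (tendsto_const_nhds (x := C * dist x y ^ (r : ℝ))).add hδU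
    rw [add_zero] at hbound
    exact le_of_tendsto_of_tendsto' ((hg x).dist (hg y)) hbound fun a ↦ hf a x y
  · choose u hu using fun a ↦ hdense a y
    let x : X := (U.map u).lim
    have hux : Tendsto u U (𝓝 x) := Ultrafilter.le_nhds_lim _
    have hfar (a : α) : dist (f a x) y ≤ C * dist x (u a) ^ (r : ℝ) + δ a + δ a :=
      (dist_triangle _ (f a (u a)) _).trans (add_le_add (hf a x (u a)) (hu a))
    have hpow : Tendsto (fun a ↦ dist x (u a) ^ (r : ℝ)) U (𝓝 0) := by
      simpa [hr.ne'] using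
        ((tendsto_const_nhds (x := x)).dist hux).rpow_const (p := (r : ℝ)) (.inr r.coe_nonneg)
    have hzero : Tendsto (fun a ↦ C * dist x (u a) ^ (r : ℝ) + δ a + δ a) U (𝓝 0) := by
      simpa using ((hpow.const_mul (C : ℝ)).add hδU).add hδU
    refine ⟨x, dist_le_zero.1 ?_⟩
    exact le_of_tendsto_of_tendsto' ((hg x).dist tendsto_const_nhds) hzero hfar

end HolderLimit

section PeanoCell

variable {ι : Type*} [Fintype ι] [DecidableEq ι]

/-- The direction in which the Peano path crosses the cell `x` along the `i`-th axis: forward if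
the sum of the other coordinates is even. -/
abbrev IsForward (x : ι → ℕ) (i : ι) : Prop := Even (∑ j ∈ Finset.univ.erase i, x j)

/-- The `r`-th of the three cells, in the order of the Peano path, into which the cell `x` is cut
along the `i`-th axis. Cells are named by their integer coordinates, so the `i`-th one triples. -/
def peanoChild (i : ι) (r : ℕ) (x : ι → ℕ) : ι → ℕ :=
  Function.update x i (3 * x i + if IsForward x i then r else 2 - r)

/-- The `n`-th cell of the Peano path on the grid obtained from a single cell by cutting along the
axes listed in the word `w`, the head of `w` being the last cut. It has `3 ^ w.count i` cells along
the `i`-th axis. -/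
def peanoCell : List ι → ℕ → ι → ℕ
  | [], _ => 0
  | i :: w, n => peanoChild i (n % 3) (peanoCell w (n / 3))

/-- The cell `y` is reached from `x` by one move along some axis in the forward direction of `x`;
this is the relation between consecutive cells of the Peano path. -/
def PeanoAdjacent (x y : ι → ℕ) : Prop :=
  ∃ l, (∀ j ≠ l, y j = x j) ∧ if IsForward x l then y l = x l + 1 else x l = y l + 1

theorem isForward_congr {x y : ι → ℕ} {i : ι} (h : ∀ j ≠ i, y j % 2 = x j % 2) :
    IsForward y i ↔ IsForward x i := by
  rw [IsForward, IsForward, Nat.even_iff, Nat.even_iff, Finset.sum_nat_mod,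
    Finset.sum_nat_mod _ _ x, Finset.sum_congr rfl fun j hj ↦ h j (Finset.ne_of_mem_erase hj)]

theorem isForward_iff_not {x y : ι → ℕ} {i l : ι} (hli : l ≠ i) (h : ∀ j ≠ l, y j = x j)
    (hl : y l = x l + 1 ∨ x l = y l + 1) : IsForward y i ↔ ¬ IsForward x i := by
  have hmem : l ∈ Finset.univ.erase i := by simp [hli]
  have hrest :
      ∑ j ∈ (Finset.univ.erase i).erase l, y j = ∑ j ∈ (Finset.univ.erase i).erase l, x j :=
    Finset.sum_congr rfl fun j hj ↦ h j (Finset.ne_of_mem_erase hj)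
  rw [IsForward, IsForward, ← Finset.add_sum_erase _ x hmem, ← Finset.add_sum_erase _ y hmem, hrest,
    Nat.even_iff, Nat.even_iff]
  omega

theorem peanoChild_self (i : ι) (r : ℕ) (x : ι → ℕ) :
    peanoChild i r x i = 3 * x i + if IsForward x i then r else 2 - r :=
  Function.update_self ..

theorem peanoChild_of_ne {i j : ι} (hj : j ≠ i) (r : ℕ) (x : ι → ℕ) : peanoChild i r x j = x j :=
  Function.update_of_ne hj ..

theorem peanoChild_mod_two {r : ℕ} (hr : Even r) (i j : ι) (x : ι → ℕ) :
    peanoChild i r x j % 2 = x j % 2 := by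
  rw [Nat.even_iff] at hr
  rcases eq_or_ne j i with rfl | hj
  · rw [peanoChild_self]
    split_ifs <;> omega
  · rw [peanoChild_of_ne hj]

theorem peanoChild_self_div {r : ℕ} (hr : r < 3) (i : ι) (x : ι → ℕ) :
    peanoChild i r x i / 3 = x i := by
  rw [peanoChild_self]
  split_ifs <;> omega

theorem exists_peanoChild_eq (i : ι) (y : ι → ℕ) :
    ∃ r < 3, peanoChild i r (Function.update y i (y i / 3)) = y := by
  by_cases hfwd : IsForward (Function.update y i (y i / 3)) i
  · refine ⟨y i % 3, Nat.mod_lt _ three_pos, ?_⟩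
    simp [peanoChild, if_pos hfwd, Nat.div_add_mod]
  · refine ⟨2 - y i % 3, by omega, ?_⟩
    have hdigit : 3 * (y i / 3) + (2 - (2 - y i % 3)) = y i := by omega
    simp [peanoChild, if_neg hfwd, hdigit]

theorem peanoAdjacent_peanoChild_succ (i : ι) {r : ℕ} (hr : r < 2) (x : ι → ℕ) :
    PeanoAdjacent (peanoChild i r x) (peanoChild i (r + 1) x) := by
  have hfwd : IsForward (peanoChild i r x) i ↔ IsForward x i :=
    isForward_congr fun j hj ↦ by rw [peanoChild_of_ne hj]
  refine ⟨i, fun j hj ↦ by rw [peanoChild_of_ne hj, peanoChild_of_ne hj], ?_⟩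
  simp only [hfwd, peanoChild_self]
  split_ifs <;> omega

namespace PeanoAdjacent

variable {x y : ι → ℕ}

theorem succ_or_succ {l : ι} (h : if IsForward x l then y l = x l + 1 else x l = y l + 1) :
    y l = x l + 1 ∨ x l = y l + 1 := by
  split_ifs at h
  exacts [.inl h, .inr h]

theorem le_add_one (h : PeanoAdjacent x y) (i : ι) : x i ≤ y i + 1 ∧ y i ≤ x i + 1 := by
  obtain ⟨l, hne, hl⟩ := h
  rcases eq_or_ne i l with rfl | hi
  · have := succ_or_succ hl
    omega
  · have := hne i hi
    omega

theorem peanoChild_two_zero (h : PeanoAdjacent x y) (i : ι) :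
    PeanoAdjacent (peanoChild i 2 x) (peanoChild i 0 y) := by
  obtain ⟨l, hne, hl⟩ := h
  have hfwd_l : IsForward (peanoChild i 2 x) l ↔ IsForward x l :=
    isForward_congr fun j _ ↦ peanoChild_mod_two even_two i j x
  rcases eq_or_ne l i with rfl | hli
  · have hfwd : IsForward y l ↔ IsForward x l := isForward_congr fun j hj ↦ by rw [hne j hj]
    refine ⟨l, fun j hj ↦ by rw [peanoChild_of_ne hj, peanoChild_of_ne hj, hne j hj], ?_⟩
    simp only [hfwd_l, peanoChild_self, hfwd]
    split_ifs at hl ⊢ <;> omega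
  · have hfwd : IsForward y i ↔ ¬ IsForward x i := isForward_iff_not hli hne (succ_or_succ hl)
    refine ⟨l, fun j hj ↦ ?_, ?_⟩
    · rcases eq_or_ne j i with rfl | hji
      · simp only [peanoChild_self, hne j hj, hfwd]
        split_ifs <;> rfl
      · rw [peanoChild_of_ne hji, peanoChild_of_ne hji, hne j hj]
    · simpa only [hfwd_l, peanoChild_of_ne hli] using hl

end PeanoAdjacent

theorem peanoAdjacent_peanoCell_succ (w : List ι) {n : ℕ} (hn : n + 1 < 3 ^ w.length) :
    PeanoAdjacent (peanoCell w n) (peanoCell w (n + 1)) := by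
  induction w generalizing n with
  | nil => simp at hn
  | cons i w ih =>
    rw [List.length_cons, pow_succ] at hn
    by_cases hdigit : n % 3 < 2
    · rw [peanoCell, peanoCell, show (n + 1) / 3 = n / 3 by omega,
        show (n + 1) % 3 = n % 3 + 1 by omega]
      exact peanoAdjacent_peanoChild_succ i hdigit _
    · rw [peanoCell, peanoCell, show (n + 1) / 3 = n / 3 + 1 by omega,
        show (n + 1) % 3 = 0 by omega, show n % 3 = 2 by omega]
      exact (ih (by omega)).peanoChild_two_zero i

theorem peanoCell_append_div (v w : List ι) (n : ℕ) (i : ι) :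
    peanoCell (v ++ w) n i / 3 ^ v.count i = peanoCell w (n / 3 ^ v.length) i := by
  induction v generalizing n with
  | nil => simp
  | cons j v ih =>
    rw [List.length_cons, pow_succ', ← Nat.div_div_eq_div_mul, ← ih, List.cons_append, peanoCell]
    rcases eq_or_ne i j with rfl | hij
    · rw [List.count_cons_self, pow_succ', ← Nat.div_div_eq_div_mul,
        peanoChild_self_div (Nat.mod_lt _ three_pos)]
    · rw [List.count_cons_of_ne hij.symm, peanoChild_of_ne hij]

theorem peanoCell_lt (w : List ι) (n : ℕ) (i : ι) : peanoCell w n i < 3 ^ w.count i := by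
  have h := peanoCell_append_div w [] n i
  rw [List.append_nil, peanoCell, Pi.zero_apply, Nat.div_eq_zero_iff] at h
  exact h.resolve_left (by positivity)

theorem exists_peanoCell_eq (w : List ι) {y : ι → ℕ} (hy : ∀ i, y i < 3 ^ w.count i) :
    ∃ n < 3 ^ w.length, peanoCell w n = y := by
  induction w generalizing y with
  | nil => exact ⟨0, by simp, funext fun i ↦ by simpa [peanoCell, eq_comm] using hy i⟩
  | cons i w ih =>
    have hparent : ∀ j, Function.update y i (y i / 3) j < 3 ^ w.count j := by
      intro j
      have hj := hy j
      rcases eq_or_ne j i with rfl | hji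
      · rw [List.count_cons_self, pow_succ] at hj
        rw [Function.update_self]
        omega
      · rwa [Function.update_of_ne hji, ← List.count_cons_of_ne hji.symm]
    obtain ⟨q, hq, hcell⟩ := ih hparent
    obtain ⟨r, hr, hchild⟩ := exists_peanoChild_eq i y
    refine ⟨3 * q + r, by rw [List.length_cons, pow_succ]; omega, ?_⟩
    rw [peanoCell, show (3 * q + r) / 3 = q by omega, show (3 * q + r) % 3 = r by omega, hcell,
      hchild]

theorem abs_sub_le_two_mul_of_div_le {a b m : ℕ} (hm : 0 < m) (hab : a / m ≤ b / m + 1)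
    (hba : b / m ≤ a / m + 1) : |(a : ℝ) - b| ≤ 2 * m := by
  have key {u v : ℕ} (huv : u / m ≤ v / m + 1) : (u : ℝ) ≤ v + 2 * m := by
    have := calc
      u ≤ m * (u / m + 1) := (Nat.lt_mul_div_succ u hm).le
      _ ≤ m * (v / m + 1 + 1) := by gcongr
      _ = m * (v / m) + 2 * m := by ring
      _ ≤ v + 2 * m := by gcongr; exact Nat.mul_div_le v m
    exact_mod_cast this
  rw [abs_le]
  constructor <;> linarith [key hab, key hba]

theorem abs_peanoCell_append_sub_le (v w : List ι) {a b : ℕ} (hb : b < 3 ^ (v ++ w).length)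
    (hab : a ≤ b) (hba : b ≤ a + 3 ^ v.length) (i : ι) :
    |(peanoCell (v ++ w) a i : ℝ) - peanoCell (v ++ w) b i| ≤ 2 * 3 ^ v.count i := by
  have hle : a / 3 ^ v.length ≤ b / 3 ^ v.length := Nat.div_le_div_right hab
  have hge : b / 3 ^ v.length ≤ a / 3 ^ v.length + 1 :=
    (Nat.div_le_div_right hba).trans_eq (Nat.add_div_right _ (by positivity))
  have hlt : b / 3 ^ v.length < 3 ^ w.length := by
    rw [List.length_append, pow_add] at hb
    exact Nat.div_lt_of_lt_mul hb
  have hcoarse : peanoCell w (a / 3 ^ v.length) i ≤ peanoCell w (b / 3 ^ v.length) i + 1 ∧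
      peanoCell w (b / 3 ^ v.length) i ≤ peanoCell w (a / 3 ^ v.length) i + 1 := by
    rcases hle.eq_or_lt with heq | hlt'
    · rw [heq]
      omega
    · have hsucc : b / 3 ^ v.length = a / 3 ^ v.length + 1 := by omega
      rw [hsucc] at hlt ⊢
      exact (peanoAdjacent_peanoCell_succ w hlt).le_add_one i
  rw [← peanoCell_append_div, ← peanoCell_append_div] at hcoarse
  exact_mod_cast abs_sub_le_two_mul_of_div_le (by positivity) hcoarse.1 hcoarse.2

end PeanoCell

section PeanoCurve

/-- The index of the cell `(j / m, (j + 1) / m]` containing `x`. Truncated subtraction puts `0` into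
the first cell. -/
noncomputable def cellIndex (m : ℕ) (x : unitInterval) : ℕ := ⌈(x : ℝ) * m⌉₊ - 1

theorem cellIndex_lt {m : ℕ} (hm : 0 < m) (x : unitInterval) : cellIndex m x < m := by
  have hceil : ⌈(x : ℝ) * m⌉₊ ≤ m := Nat.ceil_le.2 (mul_le_of_le_one_left m.cast_nonneg x.2.2)
  unfold cellIndex
  omega

theorem cellIndex_mono (m : ℕ) : Monotone (cellIndex m) := fun _ _ hxy ↦
  Nat.sub_le_sub_right
    (Nat.ceil_mono (mul_le_mul_of_nonneg_right (Subtype.coe_le_coe.2 hxy) m.cast_nonneg)) 1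

theorem cellIndex_le_add {m d : ℕ} {x y : unitInterval} (h : (y : ℝ) * m ≤ x * m + d) :
    cellIndex m y ≤ cellIndex m x + d := by
  have hceil : ⌈(y : ℝ) * m⌉₊ ≤ ⌈(x : ℝ) * m + d⌉₊ := Nat.ceil_mono h
  rw [Nat.ceil_add_natCast (mul_nonneg x.2.1 m.cast_nonneg)] at hceil
  unfold cellIndex
  omega

theorem abs_cellIndex_div_sub_le {m : ℕ} (hm : 0 < m) (x : unitInterval) :
    |(cellIndex m x : ℝ) / m - x| ≤ 1 / m := by
  have hm' : (0 : ℝ) < m := Nat.cast_pos.2 hm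
  have hx : 0 ≤ (x : ℝ) * m := mul_nonneg x.2.1 hm'.le
  have hle : ⌈(x : ℝ) * m⌉₊ ≤ cellIndex m x + 1 := by unfold cellIndex; omega
  have hge : (cellIndex m x : ℝ) ≤ x * m := by
    unfold cellIndex
    rcases Nat.eq_zero_or_pos ⌈(x : ℝ) * m⌉₊ with h0 | hpos
    · simpa [h0] using hx
    · rw [Nat.cast_pred hpos]
      linarith [Nat.ceil_lt_add_one hx]
  have hlt : (x : ℝ) * m ≤ cellIndex m x + 1 := (Nat.le_ceil _).trans (by exact_mod_cast hle)
  rw [div_sub' hm'.ne', abs_div, abs_of_pos hm']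
  gcongr
  rw [abs_le]
  constructor <;> linarith

theorem exists_cellIndex_eq {m n : ℕ} (hn : n < m) : ∃ x, cellIndex m x = n := by
  have hm : (0 : ℝ) < m := Nat.cast_pos.2 (by omega)
  refine ⟨⟨(n + 1 : ℕ) / m, by positivity, (div_le_one hm).2 (by exact_mod_cast hn)⟩, ?_⟩
  rw [cellIndex, div_mul_cancel₀ _ hm.ne', Nat.ceil_natCast, Nat.add_sub_cancel]

variable (ι : Type*) [Fintype ι]

/-- The word that cuts along every axis of `ι` once, `T` times over. -/
noncomputable def axisSweeps (T : ℕ) : List ι :=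
  (List.replicate T Finset.univ.toList).flatten

theorem axisSweeps_add (s t : ℕ) : axisSweeps ι (s + t) = axisSweeps ι s ++ axisSweeps ι t := by
  rw [axisSweeps, List.replicate_add, List.flatten_append, axisSweeps, axisSweeps]

theorem length_axisSweeps (T : ℕ) : (axisSweeps ι T).length = Fintype.card ι * T := by
  simp [axisSweeps, mul_comm]

variable [DecidableEq ι]

theorem count_axisSweeps (T : ℕ) (i : ι) : (axisSweeps ι T).count i = T := by
  have hone : (Finset.univ : Finset ι).toList.count i = 1 :=
    List.count_eq_one_of_mem (Finset.nodup_toList _) (by simp)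
  simp [axisSweeps, List.count_flatten, hone]

/-- The `T`-th approximation to the Peano curve: a step function with `3 ^ (card ι * T)` steps, with
values in the lower corners of the cells of side `3⁻ᵀ`. -/
noncomputable def peanoApprox (T : ℕ) (s : unitInterval) (i : ι) : unitInterval :=
  ⟨peanoCell (axisSweeps ι T) (cellIndex (3 ^ (axisSweeps ι T).length) s) i / 3 ^ T, by
    have hlt := peanoCell_lt (axisSweeps ι T) (cellIndex (3 ^ (axisSweeps ι T).length) s) i
    rw [count_axisSweeps] at hlt
    exact ⟨by positivity, (div_le_one (by positivity)).2 (by exact_mod_cast hlt.le)⟩⟩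

variable {ι}

theorem coe_peanoApprox (T : ℕ) (s : unitInterval) (i : ι) :
    (peanoApprox ι T s i : ℝ) =
      peanoCell (axisSweeps ι T) (cellIndex (3 ^ (axisSweeps ι T).length) s) i / 3 ^ T :=
  rfl

theorem dist_peanoApprox_le_of_dist_le {u T : ℕ} (hu : u ≤ T) {s s' : unitInterval}
    (h : dist s s' ≤ ((1 / 3) ^ u) ^ Fintype.card ι) :
    dist (peanoApprox ι T s) (peanoApprox ι T s') ≤ 2 * (1 / 3) ^ u := by
  wlog hle : s ≤ s' generalizing s s'
  · rw [dist_comm]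
    exact this (by rwa [dist_comm]) (le_of_not_ge hle)
  obtain ⟨t, rfl⟩ := Nat.exists_eq_add_of_le' hu
  set N := 3 ^ (axisSweeps ι (t + u)).length with hN
  have hlength : (N : ℝ) = 3 ^ (axisSweeps ι t).length * (3 ^ u) ^ Fintype.card ι := by
    rw [hN, axisSweeps_add, List.length_append, length_axisSweeps ι u]
    push_cast
    rw [pow_add, ← pow_mul 3 u, mul_comm u]
  have hgap : (s' : ℝ) * N ≤ s * N + (3 ^ (axisSweeps ι t).length : ℕ) := by
    have hs' : (s' : ℝ) ≤ s + ((1 / 3) ^ u) ^ Fintype.card ι := by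
      rw [dist_comm, Subtype.dist_eq, Real.dist_eq] at h
      linarith [le_abs_self ((s' : ℝ) - s)]
    calc (s' : ℝ) * N ≤ (s + ((1 / 3) ^ u) ^ Fintype.card ι) * N := by gcongr
      _ = s * N + (3 ^ (axisSweeps ι t).length : ℕ) := by
        rw [add_mul, hlength, one_div, inv_pow, inv_pow]
        push_cast
        field_simp
  have hcell (i : ι) := abs_peanoCell_append_sub_le (axisSweeps ι t) (axisSweeps ι u)
    (by rw [← axisSweeps_add]; exact cellIndex_lt (by positivity) s')
    (cellIndex_mono N hle) (cellIndex_le_add hgap) i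
  refine (dist_pi_le_iff (by positivity)).2 fun i ↦ ?_
  have hi := hcell i
  rw [← axisSweeps_add, count_axisSweeps] at hi
  rw [Subtype.dist_eq, Real.dist_eq, coe_peanoApprox, coe_peanoApprox, ← sub_div, abs_div,
    abs_of_pos (by positivity : (0 : ℝ) < 3 ^ (t + u)), div_le_iff₀ (by positivity)]
  refine hi.trans_eq ?_
  rw [pow_add, one_div, inv_pow]
  field_simp

theorem dist_peanoApprox_le [Nonempty ι] (T : ℕ) (s s' : unitInterval) :
    dist (peanoApprox ι T s) (peanoApprox ι T s') ≤
      6 * dist s s' ^ (Fintype.card ι : ℝ)⁻¹ + 2 * (1 / 3) ^ T := by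
  have hcard : Fintype.card ι ≠ 0 := Fintype.card_ne_zero
  rcases eq_or_ne s s' with rfl | hs
  · rw [dist_self, dist_self]
    positivity
  set ρ := dist s s' ^ (Fintype.card ι : ℝ)⁻¹
  have hρ_pos : 0 < ρ := Real.rpow_pos_of_pos (dist_pos.2 hs) _
  have hρ_pow : ρ ^ Fintype.card ι = dist s s' := Real.rpow_inv_natCast_pow dist_nonneg hcard
  have hρ_le : ρ ≤ 1 :=
    Real.rpow_le_one dist_nonneg (Real.dist_le_of_mem_Icc_01 s.2 s'.2) (by positivity)
  obtain ⟨u, hu_lt, hu_le⟩ := exists_nat_pow_near_of_lt_one hρ_pos hρ_le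
    (by norm_num : (0 : ℝ) < 1 / 3) (by norm_num)
  rcases le_total u T with huT | hTu
  · have h := dist_peanoApprox_le_of_dist_le (ι := ι) huT
      (hρ_pow ▸ pow_le_pow_left₀ hρ_pos.le hu_le _)
    rw [pow_succ] at hu_lt
    have : (0 : ℝ) ≤ 2 * (1 / 3) ^ T := by positivity
    linarith
  · have hT : ρ ≤ (1 / 3) ^ T :=
      hu_le.trans (pow_le_pow_of_le_one (by norm_num) (by norm_num) hTu)
    have h := dist_peanoApprox_le_of_dist_le (ι := ι) le_rfl
      (hρ_pow ▸ pow_le_pow_left₀ hρ_pos.le hT _)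
    linarith

theorem exists_dist_peanoApprox_le (T : ℕ) (y : ι → unitInterval) :
    ∃ s, dist (peanoApprox ι T s) y ≤ (1 / 3) ^ T := by
  obtain ⟨n, hn, hcell⟩ := exists_peanoCell_eq (axisSweeps ι T)
    (y := fun i ↦ cellIndex (3 ^ T) (y i))
    fun i ↦ by rw [count_axisSweeps]; exact cellIndex_lt (by positivity) _
  obtain ⟨s, rfl⟩ := exists_cellIndex_eq hn
  refine ⟨s, (dist_pi_le_iff (by positivity)).2 fun i ↦ ?_⟩
  have h := abs_cellIndex_div_sub_le (m := 3 ^ T) (by positivity) (y i)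
  rw [Subtype.dist_eq, Real.dist_eq, coe_peanoApprox, hcell]
  simpa using h

theorem exists_holderWith_surjective_unitInterval_pi (ι : Type*) [Fintype ι] [Nonempty ι] :
    ∃ γ : unitInterval → ι → unitInterval,
      HolderWith 6 (Fintype.card ι : ℝ≥0)⁻¹ γ ∧ Function.Surjective γ := by
  classical
  have hδ : Tendsto (fun T : ℕ ↦ 2 * (1 / 3 : ℝ) ^ T) atTop (𝓝 0) := by
    simpa using (tendsto_pow_atTop_nhds_zero_of_lt_one (by norm_num) (by norm_num)).const_mul
      (2 : ℝ) (f := fun T : ℕ ↦ (1 / 3 : ℝ) ^ T)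
  refine exists_holderWith_surjective_of_tendsto (f := peanoApprox ι) (by positivity) hδ
    (fun T s s' ↦ by simpa using dist_peanoApprox_le T s s') fun T y ↦ ?_
  obtain ⟨s, hs⟩ := exists_dist_peanoApprox_le T y
  exact ⟨s, hs.trans (le_mul_of_one_le_left (by positivity) one_le_two)⟩

end PeanoCurve

section HausdorffContent

/-- The `d`-dimensional Hausdorff content: as the Hausdorff measure, but with coverings by sets of
arbitrary diameter, so that it is finite on bounded sets. -/
noncomputable def hausdorffContent {X : Type*} [PseudoEMetricSpace X] (d : ℝ) : OuterMeasure X :=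
  OuterMeasure.boundedBy fun s ↦ Metric.ediam s ^ d

theorem hausdorffContent_le {X : Type*} [PseudoEMetricSpace X] (d : ℝ) (s : Set X) :
    hausdorffContent d s ≤ Metric.ediam s ^ d :=
  OuterMeasure.boundedBy_le s

theorem hausdorffContent_singleton {X : Type*} [PseudoEMetricSpace X] {d : ℝ} (hd : 0 < d)
    (x : X) : hausdorffContent d {x} = 0 := by
  simpa [hd] using hausdorffContent_le d {x}

theorem hausdorffContent_ne_top {X : Type*} [PseudoMetricSpace X] [BoundedSpace X] {d : ℝ}
    (hd : 0 ≤ d) (s : Set X) : hausdorffContent d s ≠ ∞ :=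
  ne_top_of_le_ne_top
    (ENNReal.rpow_ne_top_of_nonneg hd (Metric.isBounded_iff_ediam_ne_top.1 (.all s)))
    (hausdorffContent_le d s)

/-- A covering of small total content consists of sets of small diameter. -/
theorem hausdorffMeasure_eq_zero_of_hausdorffContent_eq_zero {X : Type*} [EMetricSpace X]
    [MeasurableSpace X] [BorelSpace X] {d : ℝ} (hd : 0 < d) {s : Set X}
    (hs : hausdorffContent d s = 0) : μH[d] s = 0 := by
  rw [Measure.hausdorffMeasure_apply, ← nonpos_iff_eq_zero]
  refine iSup₂_le fun r hr ↦ le_of_forall_pos_le_add fun ε hε ↦ ?_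
  have hpos : 0 < min ε (r ^ d) := lt_min hε (ENNReal.rpow_pos_of_nonneg hr hd.le)
  rw [← hs, hausdorffContent, OuterMeasure.boundedBy_apply] at hpos
  obtain ⟨t, hcover⟩ := iInf_lt_iff.1 hpos
  obtain ⟨hst, hlt⟩ := iInf_lt_iff.1 hcover
  obtain ⟨htε, htr⟩ := lt_min_iff.1 hlt
  have hdiam (n : ℕ) : Metric.ediam (t n) ≤ r := by
    rcases (t n).eq_empty_or_nonempty with hempty | hne
    · simp [hempty]
    · refine (ENNReal.rpow_le_rpow_iff hd).1 (le_trans ?_ htr.le)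
      exact (le_iSup_of_le hne le_rfl).trans
        (ENNReal.le_tsum (f := fun n ↦ ⨆ _ : (t n).Nonempty, Metric.ediam (t n) ^ d) n)
  rw [zero_add]
  exact iInf_le_of_le t (iInf_le_of_le hst (iInf_le_of_le hdiam htε.le))

end HausdorffContent

/-- An intermediate value theorem without connectedness: `hgap` excludes upward jumps of `f` over
the gaps of the order. -/
theorem Icc_subset_range_of_forall_covBy {α β : Type*} [TopologicalSpace α] [CompactSpace α]
    [LinearOrder α] [OrderClosedTopology α] [TopologicalSpace β] [LinearOrder β]
    [OrderClosedTopology β] {f : α → β} (hf : Continuous f) (hgap : ∀ a b, a ⋖ b → f b ≤ f a)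
    {x y : α} (hxy : x ≤ y) : Set.Icc (f x) (f y) ⊆ Set.range f := by
  rintro t ⟨hxt, hty⟩
  obtain ⟨a, ⟨hay, hat⟩, ha_max⟩ :=
    (isClosed_Iic.inter (isClosed_le hf continuous_const)).isCompact.exists_isGreatest
      (s := Set.Iic y ∩ {z | f z ≤ t}) ⟨x, hxy, hxt⟩
  obtain ⟨b, ⟨hab, htb⟩, hb_min⟩ :=
    (isClosed_Ici.inter (isClosed_le continuous_const hf)).isCompact.exists_isLeast
      (s := Set.Ici a ∩ {z | t ≤ f z}) ⟨y, hay, hty⟩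
  refine ⟨a, le_antisymm hat ?_⟩
  rcases (Set.mem_Ici.1 hab).eq_or_lt with rfl | hlt
  · exact htb
  refine le_trans htb (hgap a b ⟨hlt, fun z haz hzb ↦ hzb.not_ge (hb_min ⟨haz.le, ?_⟩)⟩)
  have hzy : z ≤ y := hzb.le.trans (hb_min ⟨hay, hty⟩)
  exact (lt_of_not_ge fun hzt ↦ haz.not_ge (ha_max ⟨hzy, hzt⟩)).le

section MonotoneSpace

/-- The order of `X` witnesses that `X` is a `C`-monotone space. The diameter is the extended one,
so that intervals are required to be bounded. -/
def IsMonotoneSpace (X : Type*) [PseudoEMetricSpace X] [LinearOrder X] (C : ℝ≥0) : Prop :=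
  ∀ ⦃a b : X⦄, a ≤ b → Metric.ediam (Set.Icc a b) ≤ C * edist a b

theorem isMonotoneSpace_of_diam_le {X : Type*} [PseudoMetricSpace X] [BoundedSpace X]
    [LinearOrder X] {C : ℝ} (h : ∀ a b : X, a ≤ b → Metric.diam (Set.Icc a b) ≤ C * dist a b) :
    IsMonotoneSpace X C.toNNReal := fun a b hab ↦ by
  rw [edist_dist, ← ENNReal.ofReal, ← ENNReal.ofReal_mul' dist_nonneg,
    ← ENNReal.ofReal_toReal (Metric.isBounded_iff_ediam_ne_top.1 (.all (Set.Icc a b)))]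
  exact ENNReal.ofReal_le_ofReal (h a b hab)

/-- The content of the initial segment `Iic x`. -/
noncomputable def contentCDF {X : Type*} [PseudoEMetricSpace X] [LinearOrder X] (d : ℝ)
    (x : X) : ℝ :=
  (hausdorffContent d (Set.Iic x)).toReal

namespace IsMonotoneSpace

variable {X : Type*} [LinearOrder X] {C : ℝ≥0}

theorem edist_le_left [PseudoEMetricSpace X] (hX : IsMonotoneSpace X C) {a b c : X} (hab : a ≤ b)
    (hbc : b ≤ c) : edist a b ≤ C * edist a c :=
  (Metric.edist_le_ediam_of_mem (s := Set.Icc a c) ⟨le_rfl, hab.trans hbc⟩ ⟨hab, hbc⟩).trans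
    (hX (hab.trans hbc))

theorem edist_le_right [PseudoEMetricSpace X] (hX : IsMonotoneSpace X C) {a b c : X} (hab : a ≤ b)
    (hbc : b ≤ c) : edist b c ≤ C * edist a c :=
  (Metric.edist_le_ediam_of_mem (s := Set.Icc a c) ⟨hab, hbc⟩ ⟨hab.trans hbc, le_rfl⟩).trans
    (hX (hab.trans hbc))

theorem orderClosedTopology [EMetricSpace X] (hX : IsMonotoneSpace X C) :
    OrderClosedTopology X where
  isClosed_le' := by
    refine isClosed_iff_forall_filter.2 fun ⟨a, b⟩ F _ hle hlim ↦ le_of_not_gt fun hba ↦ ?_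
    have hbound (p : X × X) (hp : p.1 ≤ p.2) :
        edist b a ≤ C * edist b p.2 + edist p.1 a + C * edist p.1 a := by
      rcases le_total p.1 b with hpb | hbp
      · exact (hX.edist_le_right hpb hba.le).trans le_add_self
      · calc edist b a ≤ edist b p.1 + edist p.1 a := edist_triangle _ _ _
          _ ≤ C * edist b p.2 + edist p.1 a := by gcongr; exact hX.edist_le_left hbp hp
          _ ≤ _ := le_self_add
    have hfst : Tendsto (fun p : X × X ↦ edist p.1 a) F (𝓝 0) :=
      (tendsto_iff_edist_tendsto_0.1 (continuous_fst.tendsto (a, b))).mono_left hlim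
    have hsnd : Tendsto (fun p : X × X ↦ edist b p.2) F (𝓝 0) := by
      simpa only [edist_comm b] using
        (tendsto_iff_edist_tendsto_0.1 (continuous_snd.tendsto (a, b))).mono_left hlim
    have hzero : Tendsto (fun p : X × X ↦ C * edist b p.2 + edist p.1 a + C * edist p.1 a) F
        (𝓝 0) := by
      simpa using ((ENNReal.Tendsto.const_mul hsnd (.inr ENNReal.coe_ne_top)).add hfst).add
        (ENNReal.Tendsto.const_mul hfst (.inr ENNReal.coe_ne_top))
    exact hba.ne (edist_le_zero.1 (ge_of_tendsto hzero
      (mem_of_superset (le_principal_iff.1 hle) fun p hp ↦ hbound p hp)))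

theorem holderWith_contentCDF [PseudoMetricSpace X] [BoundedSpace X] (hX : IsMonotoneSpace X C)
    (d : ℝ≥0) : HolderWith (C ^ (d : ℝ)) d (contentCDF d : X → ℝ) := by
  intro x y
  wlog hxy : x ≤ y generalizing x y
  · rw [edist_comm, edist_comm x]
    exact this y x (le_of_not_ge hxy)
  have hmono : hausdorffContent d (Set.Iic x) ≤ hausdorffContent d (Set.Iic y) :=
    measure_mono (Set.Iic_subset_Iic.2 hxy)
  have hfinite (z : X) : hausdorffContent d (Set.Iic z) ≠ ∞ :=
    hausdorffContent_ne_top d.coe_nonneg _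
  calc edist (contentCDF d x) (contentCDF d y)
      = hausdorffContent d (Set.Iic y) - hausdorffContent d (Set.Iic x) := by
        rw [edist_comm, edist_dist, Real.dist_eq, contentCDF, contentCDF,
          ← ENNReal.toReal_sub_of_le hmono (hfinite y), abs_of_nonneg ENNReal.toReal_nonneg,
          ENNReal.ofReal_toReal (ENNReal.sub_ne_top (hfinite y))]
    _ ≤ hausdorffContent d (Set.Icc x y) :=
        tsub_le_iff_left.2
          ((measure_mono Set.Iic_subset_Iic_union_Icc).trans (measure_union_le _ _))
    _ ≤ Metric.ediam (Set.Icc x y) ^ (d : ℝ) := hausdorffContent_le _ _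
    _ ≤ (C * edist x y) ^ (d : ℝ) := by gcongr; exact hX hxy
    _ = (C ^ (d : ℝ) : ℝ≥0) * edist x y ^ (d : ℝ) := by
        rw [ENNReal.mul_rpow_of_nonneg _ _ d.coe_nonneg, ENNReal.coe_rpow_of_nonneg _ d.coe_nonneg]

variable [MetricSpace X] [CompactSpace X]

theorem range_contentCDF [Nonempty X] (hX : IsMonotoneSpace X C) {d : ℝ≥0} (hd : 0 < d) :
    Set.range (contentCDF d : X → ℝ) =
      Set.Icc 0 (hausdorffContent (d : ℝ) (Set.univ : Set X)).toReal := by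
  have := hX.orderClosedTopology
  obtain ⟨m, -, hm⟩ := (isCompact_univ (X := X)).exists_isLeast Set.univ_nonempty
  obtain ⟨M, -, hM⟩ := (isCompact_univ (X := X)).exists_isGreatest Set.univ_nonempty
  have hmin : contentCDF d m = 0 := by
    have hIic : Set.Iic m = {m} :=
      Set.Subset.antisymm (fun z hz ↦ le_antisymm hz (hm (Set.mem_univ z))) (by simp)
    rw [contentCDF, hIic, hausdorffContent_singleton (NNReal.coe_pos.2 hd), ENNReal.toReal_zero]
  have hmax : contentCDF d M = (hausdorffContent (d : ℝ) (Set.univ : Set X)).toReal := by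
    rw [contentCDF, Set.eq_univ_of_forall fun z ↦ Set.mem_Iic.2 (hM (Set.mem_univ z))]
  have hgap (a b : X) (hab : a ⋖ b) : contentCDF d b ≤ contentCDF d a := by
    refine ENNReal.toReal_mono (hausdorffContent_ne_top d.coe_nonneg _) ?_
    rw [← Set.Iio_insert, hab.Iio_eq, Set.insert_eq]
    refine (measure_union_le _ _).trans_eq ?_
    rw [hausdorffContent_singleton (NNReal.coe_pos.2 hd), zero_add]
  refine Set.Subset.antisymm (Set.range_subset_iff.2 fun x ↦ ⟨ENNReal.toReal_nonneg, ?_⟩) ?_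
  · exact ENNReal.toReal_mono (hausdorffContent_ne_top d.coe_nonneg _)
      (measure_mono (Set.subset_univ _))
  · rw [← hmin, ← hmax]
    exact Icc_subset_range_of_forall_covBy ((hX.holderWith_contentCDF d).continuous hd) hgap
      (hm (Set.mem_univ M))

theorem exists_holderWith_surjective_unitInterval [MeasurableSpace X] [BorelSpace X]
    (hX : IsMonotoneSpace X C) {d : ℝ≥0} (hd : 0 < d) (hpos : 0 < μH[d] (Set.univ : Set X)) :
    ∃ (K : ℝ≥0) (h : X → unitInterval), HolderWith K d h ∧ Function.Surjective h := by
  have : Nonempty X := by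
    obtain ⟨x, -⟩ := nonempty_of_measure_ne_zero hpos.ne'
    exact ⟨x⟩
  set G := (hausdorffContent (d : ℝ) (Set.univ : Set X)).toReal
  have hG_pos : 0 < G := ENNReal.toReal_pos
    (fun h0 ↦ hpos.ne' (hausdorffMeasure_eq_zero_of_hausdorffContent_eq_zero hd h0))
    (hausdorffContent_ne_top d.coe_nonneg _)
  have hrange : Set.range (contentCDF d : X → ℝ) = Set.Icc 0 G := hX.range_contentCDF hd
  have hmem (x : X) : G⁻¹ * contentCDF d x ∈ unitInterval := by
    obtain ⟨h0, hle⟩ : contentCDF d x ∈ Set.Icc 0 G := hrange ▸ Set.mem_range_self x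
    exact ⟨by positivity, (inv_mul_le_one₀ hG_pos).2 hle⟩
  refine ⟨_, fun x ↦ ⟨G⁻¹ * contentCDF d x, hmem x⟩, (hX.holderWith_contentCDF d).smul G⁻¹,
    fun s ↦ ?_⟩
  obtain ⟨x, hx⟩ : G * s ∈ Set.range (contentCDF d : X → ℝ) :=
    hrange ▸ ⟨mul_nonneg hG_pos.le s.2.1, mul_le_of_le_one_right hG_pos.le s.2.2⟩
  exact ⟨x, Subtype.ext (by simp only [hx, inv_mul_cancel_left₀ hG_pos.ne'])⟩

end IsMonotoneSpace

end MonotoneSpace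

section Cube

/-- The cube `[0,1]^ι` with the Euclidean metric. -/
def euclideanUnitCube (ι : Type*) : Set (EuclideanSpace ℝ ι) :=
  {x | ∀ i, x i ∈ Set.Icc (0 : ℝ) 1}

variable (ι : Type*) [Fintype ι]

theorem exists_lipschitzWith_unitInterval_pi_range_eq_euclideanUnitCube :
    ∃ (L : ℝ≥0) (e : (ι → unitInterval) → EuclideanSpace ℝ ι),
      LipschitzWith L e ∧ Set.range e = euclideanUnitCube ι := by
  have hcoe : LipschitzWith 1 fun (y : ι → unitInterval) i ↦ (y i : ℝ) :=
    .of_dist_le_mul fun y z ↦ by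
      rw [NNReal.coe_one, one_mul]
      exact (dist_pi_le_iff dist_nonneg).2 fun i ↦ dist_le_pi_dist y z i
  refine ⟨_, _, (PiLp.lipschitzWith_toLp 2 fun _ : ι ↦ ℝ).comp hcoe, ?_⟩
  ext x
  refine ⟨?_, fun hx ↦ ⟨fun i ↦ ⟨x i, hx i⟩, rfl⟩⟩
  rintro ⟨y, rfl⟩ i
  exact (y i).2

theorem hausdorffMeasure_euclideanUnitCube_pos : 0 < μH[Fintype.card ι] (euclideanUnitCube ι) := by
  have himage : WithLp.ofLp '' euclideanUnitCube ι = Set.Icc (0 : ι → ℝ) 1 := by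
    ext y
    refine ⟨?_, fun hy ↦ ⟨WithLp.toLp 2 y, fun i ↦ ⟨hy.1 i, hy.2 i⟩, rfl⟩⟩
    rintro ⟨x, hx, rfl⟩
    exact ⟨fun i ↦ (hx i).1, fun i ↦ (hx i).2⟩
  have h := (PiLp.lipschitzWith_ofLp 2 fun _ : ι ↦ ℝ).hausdorffMeasure_image_le
    (d := Fintype.card ι) (Nat.cast_nonneg _) (euclideanUnitCube ι)
  rw [himage, hausdorffMeasure_pi_real, Real.volume_Icc_pi] at h
  refine pos_iff_ne_zero.2 fun h0 ↦ ?_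
  simp [h0] at h

end Cube

theorem hausdorffMeasure_univ_pos_of_lipschitzWith {X Y : Type*} [EMetricSpace X]
    [MeasurableSpace X] [BorelSpace X] [EMetricSpace Y] [MeasurableSpace Y] [BorelSpace Y]
    {L : ℝ≥0} {f : X → Y} (hf : LipschitzWith L f) {d : ℝ} (hd : 0 ≤ d)
    (hpos : 0 < μH[d] (Set.range f)) : 0 < μH[d] (Set.univ : Set X) := by
  have h := hf.hausdorffMeasure_image_le hd Set.univ
  rw [Set.image_univ] at h
  exact pos_of_mul_pos_right (hpos.trans_le h) zero_le

theorem IsMonotoneSpace.exists_lipschitzWith_range_eq_euclideanUnitCube {X : Type*} [LinearOrder X]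
    [MetricSpace X] [CompactSpace X] [MeasurableSpace X] [BorelSpace X] {C : ℝ≥0}
    (hX : IsMonotoneSpace X C) {ι : Type*} [Fintype ι] [Nonempty ι]
    (hpos : 0 < μH[Fintype.card ι] (Set.univ : Set X)) :
    ∃ (L : ℝ≥0) (f : X → EuclideanSpace ℝ ι),
      LipschitzWith L f ∧ Set.range f = euclideanUnitCube ι := by
  have hcard : (0 : ℝ≥0) < Fintype.card ι := Nat.cast_pos.2 Fintype.card_pos
  obtain ⟨K, h, hh, hh_surj⟩ :=
    hX.exists_holderWith_surjective_unitInterval hcard (by simpa using hpos)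
  obtain ⟨γ, hγ, hγ_surj⟩ := exists_holderWith_surjective_unitInterval_pi ι
  obtain ⟨L, e, he, he_range⟩ :=
    exists_lipschitzWith_unitInterval_pi_range_eq_euclideanUnitCube ι
  have hγh := hγ.comp hh
  rw [inv_mul_cancel₀ hcard.ne', holderWith_one] at hγh
  exact ⟨_, e ∘ γ ∘ h, he.comp hγh, by rw [(hγ_surj.comp hh_surj).range_comp, he_range]⟩

/-- Let `X` be a nonempty compact monotone metric space and let `k` be a
positive integer. Then `X` can be mapped onto the `k`-dimensional cube `[0,1]^k` by a Lipschitz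
map if and only if `X` has positive `k`-dimensional Hausdorff measure.

Here `X` is monotone if there is a linear order `≤` on `X` and a constant `C` such that
`diam {x : a ≤ x ≤ b} ≤ C * d(a,b)` for all `a ≤ b` in `X`. -/
theorem monotone_space_mapsOnto_cube_iff_hausdorffMeasure_pos
    {X : Type*} [MetricSpace X] [CompactSpace X] [Nonempty X]
    [MeasurableSpace X] [BorelSpace X]
    (hmon : ∃ (r : LinearOrder X) (C : ℝ),
      ∀ a b : X, r.le a b → Metric.diam {x | r.le a x ∧ r.le x b} ≤ C * dist a b)
    (k : ℕ) (hk : 0 < k) :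
    (∃ f : X → EuclideanSpace ℝ (Fin k),
        (∃ L : ℝ≥0, LipschitzWith L f) ∧
        Set.range f = {x : EuclideanSpace ℝ (Fin k) | ∀ i, x i ∈ Set.Icc (0 : ℝ) 1}) ↔
      0 < μH[(k : ℝ)] (Set.univ : Set X) := by
  constructor
  · rintro ⟨f, ⟨L, hf⟩, hrange⟩
    refine hausdorffMeasure_univ_pos_of_lipschitzWith hf k.cast_nonneg ?_
    simpa [hrange, euclideanUnitCube] using hausdorffMeasure_euclideanUnitCube_pos (Fin k)
  · intro hpos
    obtain ⟨r, C, hC⟩ := hmon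
    let _ := r
    have : Nonempty (Fin k) := Fin.pos_iff_nonempty.1 hk
    have hX : IsMonotoneSpace X C.toNNReal := isMonotoneSpace_of_diam_le hC
    obtain ⟨L, f, hf, hrange⟩ :=
      hX.exists_lipschitzWith_range_eq_euclideanUnitCube (ι := Fin k) (by simpa using hpos)
    exact ⟨f, ⟨L, hf⟩, hrange⟩
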